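/- arXiv:2402.04514 — 6 statements merged into one kernel-verified Lean document; each statement's English description precedes it below -/
import Mathlib

section
/- Assume c i j = −(c j i) and dv i j = dv j i for all i, j ∈ ι, the partition-of-unity property Σ_{j ∈ ι} c i j + c∂ i = 0 for every i ∈ ι, and that u' satisfies the low-order scheme at every node. Then the total balance Σ_{i ∈ ι} m i • (u' i − u i) + Σ_{i ∈ ι} F∂ i = 0 holds, where F∂ i := τ • ((f (u∂ i) + f (u i))·(c∂ i)) − (τ * d∂ i) • (u∂ i − u i). -/
open Finset

/-- Contraction of a flux value `G : Fin M → Fin d → ℝ` with a vector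
`c : Fin d → ℝ`, yielding a state in `Fin M → ℝ`. -/
noncomputable def contr {M d : ℕ} (G : Fin M → Fin d → ℝ) (c : Fin d → ℝ) :
    Fin M → ℝ :=
  fun k => ∑ α, G k α * c α

/-! Summing the scheme over all nodes, the viscous exchange between `i` and `j` cancels by symmetry.
Skew-symmetry turns the column sums of `c` into negated row sums, which the partition of unity
identifies with `cB`; what survives of the interior fluxes is the `f (u i)` part of the boundary
flux. -/

/-- The contraction `contr` as a bilinear map: it is the matrix-vector product. -/
noncomputable def contrBilin (M d : ℕ) :
    (Fin M → Fin d → ℝ) →ₗ[ℝ] (Fin d → ℝ) →ₗ[ℝ] (Fin M → ℝ) :=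
  Matrix.mulVecBilin ℝ ℝ

theorem contrBilin_apply {M d : ℕ} (G : Fin M → Fin d → ℝ) (c : Fin d → ℝ) :
    contrBilin M d G c = contr G c :=
  rfl

theorem sum_col_eq_of_skew {ι V : Type*} [Fintype ι] [AddCommGroup V]
    {c : ι → ι → V} {b : ι → V} (hc : ∀ i j, c i j = -c j i)
    (hpart : ∀ i, ∑ j, c i j + b i = 0) (j : ι) :
    ∑ i, c i j = b j := by
  calc ∑ i, c i j = -∑ i, c j i := by rw [← sum_neg_distrib, sum_congr rfl fun i _ => hc i j]
    _ = b j := neg_eq_of_add_eq_zero_right (hpart j)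

theorem sum_sum_smul_sub_eq_zero {ι R E : Type*} [Fintype ι] [AddCommGroup E] [DistribSMul R E]
    {a : ι → ι → R} (ha : ∀ i j, a i j = a j i) (u : ι → E) :
    ∑ i, ∑ j, a i j • (u j - u i) = 0 := by
  have hswap : ∑ i, ∑ j, a i j • u j = ∑ i, ∑ j, a i j • u i := by
    rw [sum_comm]
    exact sum_congr rfl fun i _ => sum_congr rfl fun j _ => by rw [ha]
  simp only [smul_sub, sum_sub_distrib, hswap, sub_self]

theorem sum_sum_bilin_eq_sum_boundary {ι R V W E : Type*} [Fintype ι] [CommSemiring R]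
    [AddCommGroup V] [Module R V] [AddCommMonoid W] [Module R W] [AddCommMonoid E] [Module R E]
    (B : W →ₗ[R] V →ₗ[R] E) {c : ι → ι → V} {cB : ι → V} (hc : ∀ i j, c i j = -c j i)
    (hpart : ∀ i, ∑ j, c i j + cB i = 0) (g : ι → W) :
    ∑ i, ∑ j, B (g j) (c i j) = ∑ i, B (g i) (cB i) := by
  rw [sum_comm]
  simp only [← map_sum, sum_col_eq_of_skew hc hpart]

/-- `g i` and `gB i` stand for `f (u i)` and `f (uB i)`, and `B` for the contraction of fluxes. -/
theorem lowOrder_total_balance_general {ι R V W E : Type*} [Fintype ι] [CommSemiring R]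
    [AddCommGroup V] [Module R V] [AddCommMonoid W] [Module R W] [AddCommGroup E] [Module R E]
    (B : W →ₗ[R] V →ₗ[R] E) {m dB : ι → R} {τ : R} {c : ι → ι → V} {dv : ι → ι → R}
    {cB : ι → V} {g gB : ι → W} {u uB u' : ι → E}
    (hc : ∀ i j, c i j = -c j i) (hdv : ∀ i j, dv i j = dv j i)
    (hpart : ∀ i, ∑ j, c i j + cB i = 0)
    (hscheme : ∀ i,
      m i • (u' i - u i) +
        τ • ((∑ j, (B (g j) (c i j) - dv i j • (u j - u i))) +
          B (gB i) (cB i) - dB i • (uB i - u i)) = 0) :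
    ∑ i, m i • (u' i - u i) +
      ∑ i, (τ • B (gB i + g i) (cB i) - (τ * dB i) • (uB i - u i)) = 0 := by
  have hinterior : ∑ i, ∑ j, (B (g j) (c i j) - dv i j • (u j - u i)) = ∑ i, B (g i) (cB i) := by
    simp only [sum_sub_distrib, sum_sum_bilin_eq_sum_boundary B hc hpart,
      sum_sum_smul_sub_eq_zero hdv, sub_zero]
  calc ∑ i, m i • (u' i - u i) +
        ∑ i, (τ • B (gB i + g i) (cB i) - (τ * dB i) • (uB i - u i))
      = ∑ i, m i • (u' i - u i) +
          τ • (∑ i, B (g i) (cB i) + ∑ i, B (gB i) (cB i) - ∑ i, dB i • (uB i - u i)) := by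
        simp only [smul_add, smul_sub, smul_sum, mul_smul, map_add, LinearMap.add_apply,
          sum_add_distrib, sum_sub_distrib]
        abel
    _ = ∑ i, (m i • (u' i - u i) +
          τ • ((∑ j, (B (g j) (c i j) - dv i j • (u j - u i))) +
            B (gB i) (cB i) - dB i • (uB i - u i))) := by
        rw [← hinterior, ← sum_add_distrib, ← sum_sub_distrib, smul_sum, ← sum_add_distrib]
    _ = 0 := sum_eq_zero fun i _ => hscheme i

/-- `cB`, `dB`, `uB` play the roles of the boundary data `c∂`, `d∂`, `u∂`,
and `FB` that of the boundary flux `F∂`. -/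
theorem lowOrder_total_balance
    {d M : ℕ} (hd : 1 ≤ d) (hM : 1 ≤ M)
    {ι : Type*} [Fintype ι]
    (m : ι → ℝ) (hm : ∀ i, 0 < m i)
    (τ : ℝ) (hτ : 0 < τ)
    (c : ι → ι → (Fin d → ℝ)) (dv : ι → ι → ℝ)
    (cB : ι → (Fin d → ℝ)) (dB : ι → ℝ)
    (f : (Fin M → ℝ) → (Fin M → Fin d → ℝ))
    (u : ι → (Fin M → ℝ)) (uB : ι → (Fin M → ℝ)) (u' : ι → (Fin M → ℝ))
    (hc : ∀ i j, c i j = -(c j i)) (hdv : ∀ i j, dv i j = dv j i)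
    (hpart : ∀ i, ∑ j, c i j + cB i = 0)
    (hscheme : ∀ i,
      m i • (u' i - u i) +
        τ • ((∑ j, (contr (f (u j)) (c i j) - dv i j • (u j - u i))) +
          contr (f (uB i)) (cB i) - dB i • (uB i - u i)) = 0)
    (FB : ι → (Fin M → ℝ))
    (hFB : ∀ i, FB i =
      τ • contr (f (uB i) + f (u i)) (cB i) - (τ * dB i) • (uB i - u i)) :
    ∑ i, m i • (u' i - u i) + ∑ i, FB i = 0 := by
  simp only [hFB, ← contrBilin_apply] at hscheme ⊢
  exact lowOrder_total_balance_general (contrBilin M d) hc hdv hpart hscheme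
end

section
/- Let η : S → ℝ be a convex function and q : S → (Fin d → ℝ) a function (an entropy-flux), and write a ⬝ b := Σ_{α : Fin d} a α * b α for the dot product on Fin d → ℝ. Assume the partition-of-unity property Σ_{j ∈ ι} c i j + c∂ i = 0 for every i ∈ ι, that c i i = 0 for all i, that dv i j > 0 for all j ≠ i, that d∂ i > 0, that u' satisfies the low-order scheme, the CFL condition 1 + 2*τ*(D i)/(m i) ≥ 0 at node i with D i := −(Σ_{j ≠ i} dv i j) − d∂ i, and the bar-state entropy inequalities: η(ū i j) ≤ (1/2)*(η(u i) + η(u j)) − (1/(2 * dv i j)) * ((q (u j) − q (u i)) ⬝ (c i j)) for all j ≠ i, and η(ū∂ i) ≤ (1/2)*(η(u∂ i) + η(u i)) − (1/(2 * d∂ i)) * ((q (u∂ i) − q (u i)) ⬝ (c∂ i)), where ū i j := (1/2) • (u j + u i) − (1/(2 * dv i j)) • ((f (u j) − f (u i))·(c i j)) and ū∂ i := (1/2) • (u∂ i + u i) − (1/(2 * d∂ i)) • ((f (u∂ i) − f (u i))·(c∂ i)). Then the pointwise discrete entropy inequality holds: m i * (η(u' i) − η(u i)) + τ * ( Σ_{j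 ∈ ι} ( (q (u j)) ⬝ (c i j) − dv i j * (η(u j) − η(u i)) ) + (q (u∂ i)) ⬝ (c∂ i) − d∂ i * (η(u∂ i) − η(u i)) ) ≤ 0. -/
open Finset

/-- Dot product on `Fin d → ℝ`. -/
noncomputable def dot {d : ℕ} (a b : Fin d → ℝ) : ℝ := ∑ α, a α * b α

/-! Because the vectors `c i j`, `c∂ i` sum to zero, subtracting `f (u i)` from every flux value
leaves the scheme unchanged. It then reads `m (u' - u) = ∑ 2 τ ν (ū - u)`, which under the CFL
condition exhibits `u'` as a convex combination of the old state and the bar states. Jensen's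
inequality bounds `m (η u' - η u)` by `∑ 2 τ ν (η ū - η u)`, and after inserting the bar-state
entropy inequalities the same identity, now for `η` and `q` in place of the state and `f`,
evaluates the sum. -/

section BarState

variable {E V Φ J : Type*} [AddCommGroup E] [Module ℝ E]
  [AddCommGroup V] [Module ℝ V] [AddCommGroup Φ] [Module ℝ Φ]

/-- The bar state between `x` and a neighbouring state `y` for the graph viscosity `ν`, where `g`
is the contracted flux difference `(f y - f x)·c`. With `E = ℝ`, `x` and `y` entropy values, and `g`
an entropy-flux difference, it is the right-hand side of the bar-state entropy inequality. -/
noncomputable def barState (ν : ℝ) (x y g : E) : E :=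
  (1 / 2 : ℝ) • (y + x) - (1 / (2 * ν)) • g

theorem two_mul_smul_barState_sub {ν : ℝ} (hν : ν ≠ 0) (x y g : E) :
    (2 * ν) • (barState ν x y g - x) = ν • (y - x) - g := by
  unfold barState
  match_scalars <;> field

theorem sum_map_sub_eq_sum_map (B : Φ →ₗ[ℝ] V →ₗ[ℝ] E) {s : Finset J} {c : J → V}
    (hc : ∑ j ∈ s, c j = 0) (F : J → Φ) (G : Φ) :
    ∑ j ∈ s, B (F j - G) (c j) = ∑ j ∈ s, B (F j) (c j) := by
  simp only [map_sub, LinearMap.sub_apply, sum_sub_distrib, ← map_sum, hc, map_zero, sub_zero]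

theorem sum_smul_barState_sub (B : Φ →ₗ[ℝ] V →ₗ[ℝ] E) {s : Finset J} {c : J → V} {ν : J → ℝ}
    (hc : ∑ j ∈ s, c j = 0) (hν : ∀ j ∈ s, ν j ≠ 0) (τ : ℝ) (F : J → Φ) (G : Φ)
    (x : E) (y : J → E) :
    ∑ j ∈ s, (2 * τ * ν j) • (barState (ν j) x (y j) (B (F j - G) (c j)) - x) =
      -(τ • ∑ j ∈ s, (B (F j) (c j) - ν j • (y j - x))) := by
  calc
    _ = ∑ j ∈ s, τ • (ν j • (y j - x) - B (F j - G) (c j)) := sum_congr rfl fun j hj => by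
      rw [← two_mul_smul_barState_sub (hν j hj), smul_smul, mul_left_comm τ, mul_assoc 2]
    _ = -(τ • ∑ j ∈ s, (B (F j) (c j) - ν j • (y j - x))) := by
      rw [← smul_sum, sum_sub_distrib, sum_sub_distrib, sum_map_sub_eq_sum_map B hc, ← smul_neg,
        neg_sub]

end BarState

theorem convexOn_mul_map_sub_le_sum {E J : Type*} [AddCommGroup E] [Module ℝ E] {K : Set E}
    {η : E → ℝ} (hη : ConvexOn ℝ K η) {s : Finset J} {w : J → ℝ} {p : J → E} {W : ℝ} {x z : E}
    (hW : 0 < W) (hw : ∀ j ∈ s, 0 ≤ w j) (hsum : ∑ j ∈ s, w j ≤ W) (hx : x ∈ K)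
    (hp : ∀ j ∈ s, p j ∈ K) (hz : W • (z - x) = ∑ j ∈ s, w j • (p j - x)) :
    W * (η z - η x) ≤ ∑ j ∈ s, w j * (η (p j) - η x) := by
  set v := 1 - ∑ j ∈ s, w j / W with hv
  have hv_nonneg : 0 ≤ v := by
    rw [hv, ← sum_div, sub_nonneg]
    exact (div_le_one hW).2 hsum
  have hz_combination : z = v • x + ∑ j ∈ s, (w j / W) • p j := by
    rw [← sub_add_cancel z x, ← inv_smul_smul₀ hW.ne' (z - x), hz, hv]
    simp only [smul_sum, smul_sub, sum_sub_distrib, smul_smul, sub_smul, one_smul, sum_smul,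
      inv_mul_eq_div]
    abel
  have jensen := hη.map_add_sum_le (fun j hj => div_nonneg (hw j hj) hW.le)
    (sub_add_cancel 1 _) hp hv_nonneg hx
  rw [← hz_combination] at jensen
  calc
    W * (η z - η x) ≤ W * ((v • η x + ∑ j ∈ s, (w j / W) • η (p j)) - η x) := by gcongr
    _ = W * ∑ j ∈ s, (w j / W) * (η (p j) - η x) := by
      simp only [hv, smul_eq_mul, mul_sub, sum_sub_distrib, ← sum_mul]
      ring
    _ = ∑ j ∈ s, w j * (η (p j) - η x) := by
      rw [mul_sum]
      exact sum_congr rfl fun j _ => by field_simp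

theorem sum_insertNone_erase_univ {ι A : Type*} [Fintype ι] [DecidableEq ι] [AddCommMonoid A]
    {i : ι} (g : Option ι → A) (hg : g (some i) = 0) :
    ∑ o ∈ insertNone (univ.erase i), g o = ∑ j, g (some j) + g none := by
  rw [sum_insertNone, sum_erase univ (f := fun j => g (some j)) hg, add_comm]

section EntropyInequality

variable {E V Φ Ψ : Type*} [AddCommGroup E] [Module ℝ E] [AddCommGroup V] [Module ℝ V]
  [AddCommGroup Φ] [Module ℝ Φ] [AddCommGroup Ψ] [Module ℝ Ψ]
  {K : Set E} {η : E → ℝ} {f : E → Φ} {q : E → Ψ}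

-- `κ` and `δ` stand for the contractions `G·c` of fluxes and `a ⬝ b` of entropy fluxes.
variable (κ : Φ →ₗ[ℝ] V →ₗ[ℝ] E) (δ : Ψ →ₗ[ℝ] V →ₗ[ℝ] ℝ)

theorem stencil_entropy_inequality {J : Type*} (hη : ConvexOn ℝ K η)
    {s : Finset J} {c : J → V} {ν : J → ℝ} {y : J → E} {x x' : E} {m τ : ℝ}
    (hm : 0 < m) (hτ : 0 ≤ τ) (hc : ∑ j ∈ s, c j = 0) (hν : ∀ j ∈ s, 0 < ν j)
    (hscheme : m • (x' - x) + τ • ∑ j ∈ s, (κ (f (y j)) (c j) - ν j • (y j - x)) = 0)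
    (hCFL : 2 * τ * ∑ j ∈ s, ν j ≤ m) (hx : x ∈ K)
    (hbar : ∀ j ∈ s, barState (ν j) x (y j) (κ (f (y j) - f x) (c j)) ∈ K)
    (hbar_entropy : ∀ j ∈ s, η (barState (ν j) x (y j) (κ (f (y j) - f x) (c j))) ≤
      barState (ν j) (η x) (η (y j)) (δ (q (y j) - q x) (c j))) :
    m * (η x' - η x) + τ * ∑ j ∈ s, (δ (q (y j)) (c j) - ν j * (η (y j) - η x)) ≤ 0 := by
  have hν_ne : ∀ j ∈ s, ν j ≠ 0 := fun j hj => (hν j hj).ne'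
  have hw : ∀ j ∈ s, 0 ≤ 2 * τ * ν j := fun j hj => by have := hν j hj; positivity
  have hupdate : m • (x' - x) = ∑ j ∈ s,
      (2 * τ * ν j) • (barState (ν j) x (y j) (κ (f (y j) - f x) (c j)) - x) := by
    rw [sum_smul_barState_sub κ hc hν_ne]
    exact eq_neg_of_add_eq_zero_left hscheme
  rw [← le_neg_iff_add_nonpos_right]
  calc
    m * (η x' - η x)
    _ ≤ ∑ j ∈ s, 2 * τ * ν j *
        (η (barState (ν j) x (y j) (κ (f (y j) - f x) (c j))) - η x) :=
      convexOn_mul_map_sub_le_sum hη hm hw (by rwa [← mul_sum]) hx hbar hupdate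
    _ ≤ ∑ j ∈ s, 2 * τ * ν j *
        (barState (ν j) (η x) (η (y j)) (δ (q (y j) - q x) (c j)) - η x) :=
      sum_le_sum fun j hj =>
        mul_le_mul_of_nonneg_left (sub_le_sub_right (hbar_entropy j hj) _) (hw j hj)
    _ = -(τ * ∑ j ∈ s, (δ (q (y j)) (c j) - ν j * (η (y j) - η x))) :=
      sum_smul_barState_sub δ hc hν_ne τ (fun j => q (y j)) (q x) (η x) (fun j => η (y j))

theorem lowOrder_pointwise_entropy_inequality_general {ι : Type*} [Fintype ι] [DecidableEq ι]
    (hη : ConvexOn ℝ K η) {c : ι → V} {dv : ι → ℝ} {cB : V} {dB : ℝ}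
    {u : ι → E} {uB u' : E} {m τ : ℝ} {i : ι}
    (hm : 0 < m) (hτ : 0 ≤ τ) (hpart : ∑ j, c j + cB = 0) (hci : c i = 0)
    (hdv : ∀ j, j ≠ i → 0 < dv j) (hdB : 0 < dB)
    (hscheme : m • (u' - u i) +
      τ • ((∑ j, (κ (f (u j)) (c j) - dv j • (u j - u i))) + κ (f uB) cB - dB • (uB - u i)) = 0)
    (hCFL : 0 ≤ 1 + 2 * τ * (-(∑ j ∈ univ.erase i, dv j) - dB) / m)
    (hu : u i ∈ K)
    (hbar : ∀ j, j ≠ i → barState (dv j) (u i) (u j) (κ (f (u j) - f (u i)) (c j)) ∈ K)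
    (hbarB : barState dB (u i) uB (κ (f uB - f (u i)) cB) ∈ K)
    (hbar_entropy : ∀ j, j ≠ i →
      η (barState (dv j) (u i) (u j) (κ (f (u j) - f (u i)) (c j))) ≤
        barState (dv j) (η (u i)) (η (u j)) (δ (q (u j) - q (u i)) (c j)))
    (hbarB_entropy : η (barState dB (u i) uB (κ (f uB - f (u i)) cB)) ≤
      barState dB (η (u i)) (η uB) (δ (q uB - q (u i)) cB)) :
    m * (η u' - η (u i)) +
      τ * ((∑ j, (δ (q (u j)) (c j) - dv j * (η (u j) - η (u i)))) +
        δ (q uB) cB - dB * (η uB - η (u i))) ≤ 0 := by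
  -- The boundary data at `i` act as one more neighbour, indexed by `none`.
  let cExt : Option ι → V := fun o => o.elim cB c
  let νExt : Option ι → ℝ := fun o => o.elim dB dv
  let uExt : Option ι → E := fun o => o.elim uB u
  have hCFL_stencil : 2 * τ * ∑ o ∈ insertNone (univ.erase i), νExt o ≤ m := by
    have := mul_nonneg hm.le hCFL
    rw [mul_add, mul_one, mul_div_cancel₀ _ hm.ne'] at this
    rw [sum_insertNone]
    dsimp only [νExt, Option.elim]
    linarith
  have stencil := stencil_entropy_inequality (f := f) (q := q) (c := cExt) (ν := νExt) (y := uExt)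
    (x' := u') κ δ hη hm hτ
    ((sum_insertNone_erase_univ cExt hci).trans hpart)
    (forall_mem_insertNone.2 ⟨hdB, fun j hj => hdv j (ne_of_mem_erase hj)⟩)
    (by
      rw [sum_insertNone_erase_univ _ (by simp [cExt, uExt, hci]), ← add_sub_assoc]
      exact hscheme)
    hCFL_stencil hu
    (forall_mem_insertNone.2 ⟨hbarB, fun j hj => hbar j (ne_of_mem_erase hj)⟩)
    (forall_mem_insertNone.2 ⟨hbarB_entropy, fun j hj => hbar_entropy j (ne_of_mem_erase hj)⟩)
  rwa [sum_insertNone_erase_univ _ (by simp [cExt, uExt, hci]), ← add_sub_assoc] at stencil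

end EntropyInequality

/-- Pointwise discrete entropy inequality for the low-order update: `cB`,
`dB`, `uB` play the roles of the boundary data `c∂`, `d∂`, `u∂`; `ubar` and
`ubarB` are the bar states, and `D` the diagonal viscosity. -/
theorem lowOrder_pointwise_entropy_inequality
    {d M : ℕ} (hd : 1 ≤ d) (hM : 1 ≤ M)
    {ι : Type*} [Fintype ι] [DecidableEq ι]
    (m : ι → ℝ) (hm : ∀ i, 0 < m i)
    (τ : ℝ) (hτ : 0 < τ)
    (c : ι → ι → (Fin d → ℝ)) (dv : ι → ι → ℝ)
    (cB : ι → (Fin d → ℝ)) (dB : ι → ℝ)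
    (f : (Fin M → ℝ) → (Fin M → Fin d → ℝ))
    (u : ι → (Fin M → ℝ)) (uB : ι → (Fin M → ℝ)) (u' : ι → (Fin M → ℝ))
    (η : (Fin M → ℝ) → ℝ) (hη : ConvexOn ℝ Set.univ η)
    (q : (Fin M → ℝ) → (Fin d → ℝ))
    (hpart : ∀ i, ∑ j, c i j + cB i = 0)
    (hcii : ∀ i, c i i = 0)
    (hdv : ∀ i j, j ≠ i → 0 < dv i j)
    (hscheme : ∀ i,
      m i • (u' i - u i) +
        τ • ((∑ j, (contr (f (u j)) (c i j) - dv i j • (u j - u i))) +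
          contr (f (uB i)) (cB i) - dB i • (uB i - u i)) = 0)
    (ubar : ι → ι → (Fin M → ℝ))
    (hubar : ∀ i j, ubar i j =
      (1 / 2 : ℝ) • (u j + u i) -
        (1 / (2 * dv i j)) • contr (f (u j) - f (u i)) (c i j))
    (ubarB : ι → (Fin M → ℝ))
    (hubarB : ∀ i, ubarB i =
      (1 / 2 : ℝ) • (uB i + u i) -
        (1 / (2 * dB i)) • contr (f (uB i) - f (u i)) (cB i))
    (D : ι → ℝ)
    (hD : ∀ i, D i = -(∑ j ∈ Finset.univ.erase i, dv i j) - dB i)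
    (i : ι)
    (hdB : 0 < dB i)
    (hCFL : 0 ≤ 1 + 2 * τ * D i / m i)
    (hbar_entropy : ∀ j, j ≠ i →
      η (ubar i j) ≤ (1 / 2) * (η (u i) + η (u j)) -
        (1 / (2 * dv i j)) * dot (q (u j) - q (u i)) (c i j))
    (hbarB_entropy :
      η (ubarB i) ≤ (1 / 2) * (η (uB i) + η (u i)) -
        (1 / (2 * dB i)) * dot (q (uB i) - q (u i)) (cB i)) :
    m i * (η (u' i) - η (u i)) +
      τ * ((∑ j, (dot (q (u j)) (c i j) - dv i j * (η (u j) - η (u i)))) +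
        dot (q (uB i)) (cB i) - dB i * (η (uB i) - η (u i))) ≤ 0 := by
  simp only [hubar, hubarB, hD, add_comm (η (u i))] at hbar_entropy hbarB_entropy hCFL
  exact lowOrder_pointwise_entropy_inequality_general (f := f) (q := q) (u := u)
    (Matrix.mulVecBilin ℝ ℝ) (dotProductBilin ℝ ℝ) hη (hm i) hτ.le (hpart i) (hcii i) (hdv i) hdB
    (hscheme i) hCFL (Set.mem_univ _) (fun _ _ => Set.mem_univ _) (Set.mem_univ _)
    hbar_entropy hbarB_entropy
end

section
/- Let η : S → ℝ and q : S → (Fin d → ℝ) be functions, and write a ⬝ b := Σ_{α : Fin d} a α * b α for the dot product on Fin d → ℝ. Assume c i j = −(c j i) and dv i j = dv j i for all i, j ∈ ι, the partition-of-unity property Σ_{j ∈ ι} c i j + c∂ i = 0 for every i ∈ ι, and that at every node i ∈ ι the pointwise discrete entropy inequality holds: m i * (η(u' i) − η(u i)) + τ * ( Σ_{j ∈ ι} ( (q (u j)) ⬝ (c i j) − dv i j * (η(u j) − η(u i)) ) + (q (u∂ i)) ⬝ (c∂ i) − d∂ i * (η(u∂ i) − η(u i)) ) ≤ 0. Then the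 global entropy inequality holds: Σ_{i ∈ ι} m i * η(u' i) + τ * Σ_{i ∈ ι} Q∂ i ≤ Σ_{i ∈ ι} m i * η(u i), where Q∂ i := (q (u∂ i) + q (u i)) ⬝ (c∂ i) − d∂ i * (η(u∂ i) − η(u i)). -/
/-!
Sum the nodal inequalities over all nodes. A double sum of interior fluxes `⟨f j, c i j⟩` sees `c`
only through its column sums, which skew-symmetry and the partition of unity turn into the boundary
vectors: this produces the term `q (u i) ⬝ c∂ i` of `Q∂ i`. A double sum of viscous differences sees
`dv` only through its row and column sums, which agree by symmetry, so the viscous terms cancel.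
-/

open Finset

theorem dot_eq_dotProductBilin {d : ℕ} (a b : Fin d → ℝ) : dot a b = dotProductBilin ℝ ℝ a b := rfl

section NodalSums

variable {ι : Type*} [Fintype ι]

theorem sum_left_eq_of_skew {G : Type*} [AddCommGroup G] {c : ι → ι → G} {b : ι → G}
    (hc : ∀ i j, c i j = -c j i) (hb : ∀ i, ∑ j, c i j + b i = 0) (j : ι) :
    ∑ i, c i j = b j := by
  simp_rw [hc _ j, sum_neg_distrib]
  exact neg_eq_of_add_eq_zero_right (hb j)

theorem sum_sum_mul_sub_eq_zero {R : Type*} [NonUnitalNonAssocRing R] {w : ι → ι → R}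
    (hw : ∀ i, ∑ j, w i j = ∑ j, w j i) (e : ι → R) :
    ∑ i, ∑ j, w i j * (e j - e i) = 0 := by
  have hcol : ∑ i, ∑ j, w i j * e j = ∑ i, (∑ j, w j i) * e i := by
    rw [sum_comm]
    simp_rw [sum_mul]
  have hrow : ∑ i, ∑ j, w i j * e i = ∑ i, (∑ j, w i j) * e i := by
    simp_rw [sum_mul]
  simp_rw [mul_sub, sum_sub_distrib]
  rw [hcol, hrow, sub_eq_zero]
  simp_rw [hw]

theorem sum_sum_bilin_eq_sum_bilin {R V W P : Type*} [CommSemiring R]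
    [AddCommMonoid V] [Module R V] [AddCommMonoid W] [Module R W] [AddCommMonoid P] [Module R P]
    (B : V →ₗ[R] W →ₗ[R] P) {c : ι → ι → W} {b : ι → W}
    (hc : ∀ j, ∑ i, c i j = b j) (f : ι → V) :
    ∑ i, ∑ j, B (f j) (c i j) = ∑ j, B (f j) (b j) := by
  rw [sum_comm]
  simp_rw [← map_sum, hc]

end NodalSums

section EntropyBalance

variable {ι R V W : Type*} [Fintype ι] [CommRing R]
  [AddCommMonoid V] [Module R V] [AddCommMonoid W] [Module R W] (B : V →ₗ[R] W →ₗ[R] R)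

theorem sum_entropy_residual_eq (m : ι → R) (τ : R) {c : ι → ι → W} {cB : ι → W}
    {dv : ι → ι → R} (dB : ι → R) (hc : ∀ j, ∑ i, c i j = cB j)
    (hdv : ∀ i, ∑ j, dv i j = ∑ j, dv j i) (e e' eB : ι → R) (f fB : ι → V) :
    ∑ i, (m i * (e' i - e i) +
        τ * ((∑ j, (B (f j) (c i j) - dv i j * (e j - e i))) +
          B (fB i) (cB i) - dB i * (eB i - e i))) =
      ∑ i, m i * e' i + τ * ∑ i, (B (fB i + f i) (cB i) - dB i * (eB i - e i)) -
        ∑ i, m i * e i := by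
  have hflux := sum_sum_bilin_eq_sum_bilin B hc f
  have hvisc := sum_sum_mul_sub_eq_zero hdv e
  simp only [map_add, LinearMap.add_apply, mul_sub (m _), sum_add_distrib, sum_sub_distrib,
    ← mul_sum, hflux, hvisc]
  ring

theorem lowOrder_global_entropy_inequality_general [PartialOrder R] [IsOrderedAddMonoid R]
    {S : Type*} (η : S → R) (q : S → V) (u u' uB : ι → S) (m : ι → R) (τ : R)
    (c : ι → ι → W) (cB : ι → W) (dv : ι → ι → R) (dB : ι → R)
    (hc : ∀ j, ∑ i, c i j = cB j) (hdv : ∀ i, ∑ j, dv i j = ∑ j, dv j i)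
    (hpointwise : ∀ i,
      m i * (η (u' i) - η (u i)) +
        τ * ((∑ j, (B (q (u j)) (c i j) - dv i j * (η (u j) - η (u i)))) +
          B (q (uB i)) (cB i) - dB i * (η (uB i) - η (u i))) ≤ 0) :
    ∑ i, m i * η (u' i) +
        τ * ∑ i, (B (q (uB i) + q (u i)) (cB i) - dB i * (η (uB i) - η (u i))) ≤
      ∑ i, m i * η (u i) := by
  rw [← sub_nonpos, ← sum_entropy_residual_eq B m τ dB hc hdv (fun i ↦ η (u i))
    (fun i ↦ η (u' i)) (fun i ↦ η (uB i)) (fun i ↦ q (u i)) (fun i ↦ q (uB i))]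
  exact sum_nonpos fun i _ ↦ hpointwise i

end EntropyBalance

/-- Global discrete entropy inequality: `cB`, `dB`, `uB` play the roles of the
boundary data `c∂`, `d∂`, `u∂`, and `QB` that of the viscous boundary entropy
flux `Q∂`. -/
theorem lowOrder_global_entropy_inequality
    {d M : ℕ} (hd : 1 ≤ d) (hM : 1 ≤ M)
    {ι : Type*} [Fintype ι]
    (m : ι → ℝ) (hm : ∀ i, 0 < m i)
    (τ : ℝ) (hτ : 0 < τ)
    (c : ι → ι → (Fin d → ℝ)) (dv : ι → ι → ℝ)
    (cB : ι → (Fin d → ℝ)) (dB : ι → ℝ)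
    (u : ι → (Fin M → ℝ)) (u' : ι → (Fin M → ℝ)) (uB : ι → (Fin M → ℝ))
    (η : (Fin M → ℝ) → ℝ) (q : (Fin M → ℝ) → (Fin d → ℝ))
    (hc : ∀ i j, c i j = -(c j i)) (hdv : ∀ i j, dv i j = dv j i)
    (hpart : ∀ i, ∑ j, c i j + cB i = 0)
    (hpointwise : ∀ i,
      m i * (η (u' i) - η (u i)) +
        τ * ((∑ j, (dot (q (u j)) (c i j) - dv i j * (η (u j) - η (u i)))) +
          dot (q (uB i)) (cB i) - dB i * (η (uB i) - η (u i))) ≤ 0)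
    (QB : ι → ℝ)
    (hQB : ∀ i, QB i =
      dot (q (uB i) + q (u i)) (cB i) - dB i * (η (uB i) - η (u i))) :
    ∑ i, m i * η (u' i) + τ * ∑ i, QB i ≤ ∑ i, m i * η (u i) := by
  simp only [dot_eq_dotProductBilin] at hpointwise hQB
  simpa only [hQB] using
    lowOrder_global_entropy_inequality_general (dotProductBilin ℝ ℝ) η q u u' uB m τ c cB dv dB
      (sum_left_eq_of_skew hc hpart) (fun i ↦ sum_congr rfl fun j _ ↦ hdv i j) hpointwise
end

section
/- Let mM : ι → ι → ℝ be a consistent mass matrix with row sums Σ_{j ∈ ι} mM i j = m i for every i ∈ ι, and assume the partition-of-unity property Σ_{j ∈ ι} c i j + c∂ i = 0 for every i ∈ ι. Suppose uL satisfies the low-order scheme with viscosities dvL, d∂L, and uH satisfies the high-order scheme: Σ_{j ∈ ι} mM i j • (uH j − u j) + τ • ( Σ_{j ∈ ι} ( (f (u j))·(c i j) − dvH i j • (u j − u i) ) + (f (u∂ i))·(c∂ i) − d∂H i • (u∂ i − u i) ) = 0 for every i. Define FL i j := τ • ((f (u j) + f (u i))·(c i j)) − (τ * dvL i j) • (u j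 − u i), FH i j := τ • ((f (u j) + f (u i))·(c i j)) − (τ * dvH i j) • (u j − u i) + (mM i j − (if i = j then m i else 0)) • ((uH j − u j) − (uH i − u i)), F∂L i := τ • ((f (u∂ i) + f (u i))·(c∂ i)) − (τ * d∂L i) • (u∂ i − u i), F∂H i := τ • ((f (u∂ i) + f (u i))·(c∂ i)) − (τ * d∂H i) • (u∂ i − u i), and set A i j := FL i j − FH i j and A∂ i := F∂L i − F∂H i. Then for every i ∈ ι: m i • (uH i) = m i • (uL i) + Σ_{j ∈ ι} A i j + A∂ i. -/
open Finset

/-! The low- and the high-order scheme contain the same fluxes, and so do the numerical fluxes `FL`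
and `FH`; each difference is the same difference of viscous terms. What remains are the mass-matrix
terms, for which the row sums give
`∑ j, M i j • x j = m i • x i + ∑ j, (M i j - δ i j * m i) • (x j - x i)`: replacing the
consistent by the lumped mass matrix costs exactly the mass correction in `FH`. -/

section

variable {R V ι : Type*} [Ring R] [AddCommGroup V] [Module R V]

/-- The flux of a graph-viscosity scheme between two states `v` and `w`: an inviscid flux `p`
stabilised by the viscosity `ν`, over a time step `τ`. The boundary flux of a node is encoded in the
same way, with `w` the boundary state. -/
def viscousFlux (τ : R) (p : V) (ν : R) (v w : V) : V :=
  τ • p - (τ * ν) • (w - v)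

theorem viscousFlux_sub_viscousFlux (τ : R) (p : V) (ν ν' : R) (v w : V) :
    viscousFlux τ p ν v w - viscousFlux τ p ν' v w = τ • (ν' - ν) • (w - v) := by
  simp only [viscousFlux, mul_smul, sub_smul, smul_sub τ (ν' • (w - v))]
  abel

variable [Fintype ι]

/-- The spatial part of a graph-viscosity scheme at a node with state `v`: the flux contributions
`g` of the nodes with states `u`, the boundary contribution `gB` with boundary state `uB`, and the
viscosities `ν`, `νB`, over a time step `τ`. -/
def viscousUpdate (τ : R) (g : ι → V) (gB : V) (ν : ι → R) (νB : R) (u : ι → V) (uB v : V) : V :=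
  τ • (∑ j, (g j - ν j • (u j - v)) + gB - νB • (uB - v))

theorem viscousUpdate_sub_viscousUpdate (τ : R) (g p : ι → V) (gB pB : V) (ν ν' : ι → R)
    (νB νB' : R) (u : ι → V) (uB v : V) :
    viscousUpdate τ g gB ν νB u uB v - viscousUpdate τ g gB ν' νB' u uB v =
      ∑ j, (viscousFlux τ (p j) (ν j) v (u j) - viscousFlux τ (p j) (ν' j) v (u j)) +
        (viscousFlux τ pB νB v uB - viscousFlux τ pB νB' v uB) := by
  simp only [viscousFlux_sub_viscousFlux, viscousUpdate, ← smul_sum, ← smul_add, ← smul_sub,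
    sub_smul, sum_sub_distrib]
  congr 1
  abel

variable [DecidableEq ι]

theorem sum_sub_ite_smul_sub (a : ι → R) (b : R) (x : ι → V) (i : ι) :
    ∑ j, (a j - if i = j then b else 0) • (x j - x i) =
      ∑ j, a j • x j - (∑ j, a j) • x i := by
  have ite_smul_sub_eq_zero (j : ι) : (if i = j then b else 0) • (x j - x i) = 0 := by
    split_ifs with h
    · rw [h, sub_self, smul_zero]
    · rw [zero_smul]
  simp only [sub_smul _ _ (x _ - x i), ite_smul_sub_eq_zero, sub_zero, smul_sub, sum_sub_distrib,
    sum_smul]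

/-- `g i j` and `p i j` stand for the contractions of `f (u j)` and of `f (u j) + f (u i)` with
`c i j`, and `gB`, `pB` for their boundary counterparts. -/
theorem high_low_order_identity_general (m : ι → R) (mM : ι → ι → R)
    (hrow : ∀ i, ∑ j, mM i j = m i) (τ : R) (g p : ι → ι → V) (gB pB : ι → V)
    (dvL dvH : ι → ι → R) (dBL dBH : ι → R) (u uB uL uH : ι → V)
    (hlow : ∀ i, m i • (uL i - u i) +
      viscousUpdate τ (g i) (gB i) (dvL i) (dBL i) u (uB i) (u i) = 0)
    (hhigh : ∀ i, ∑ j, mM i j • (uH j - u j) +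
      viscousUpdate τ (g i) (gB i) (dvH i) (dBH i) u (uB i) (u i) = 0) (i : ι) :
    m i • uH i = m i • uL i +
      ∑ j, (viscousFlux τ (p i j) (dvL i j) (u i) (u j) -
        (viscousFlux τ (p i j) (dvH i j) (u i) (u j) +
          (mM i j - if i = j then m i else 0) • ((uH j - u j) - (uH i - u i)))) +
      (viscousFlux τ (pB i) (dBL i) (u i) (uB i) -
        viscousFlux τ (pB i) (dBH i) (u i) (uB i)) := by
  have viscous_part := viscousUpdate_sub_viscousUpdate τ (g i) (p i) (gB i) (pB i)
    (dvL i) (dvH i) (dBL i) (dBH i) u (uB i) (u i)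
  have mass_part := sum_sub_ite_smul_sub (mM i) (m i) (fun j => uH j - u j) i
  rw [hrow] at mass_part
  simp only [← sub_sub, sum_sub_distrib, smul_sub] at viscous_part mass_part hlow hhigh ⊢
  linear_combination (norm := abel) hhigh i - hlow i + viscous_part + mass_part

end

/-- High/low-order flux identity: `cB`, `uB` play the roles of the boundary
data `c∂`, `u∂`; `dBL`, `dBH` those of the boundary viscosities `d∂L`, `d∂H`;
`FBL`, `FBH`, `AB` those of `F∂L`, `F∂H`, `A∂`. -/
theorem high_low_order_identity
    {d M : ℕ} (hd : 1 ≤ d) (hM : 1 ≤ M)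
    {ι : Type*} [Fintype ι] [DecidableEq ι]
    (m : ι → ℝ) (hm : ∀ i, 0 < m i)
    (mM : ι → ι → ℝ) (hrow : ∀ i, ∑ j, mM i j = m i)
    (τ : ℝ) (hτ : 0 < τ)
    (c : ι → ι → (Fin d → ℝ))
    (dvL : ι → ι → ℝ) (dBL : ι → ℝ)
    (dvH : ι → ι → ℝ) (dBH : ι → ℝ)
    (cB : ι → (Fin d → ℝ))
    (f : (Fin M → ℝ) → (Fin M → Fin d → ℝ))
    (u : ι → (Fin M → ℝ)) (uB : ι → (Fin M → ℝ))
    (uL : ι → (Fin M → ℝ)) (uH : ι → (Fin M → ℝ))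
    (hpart : ∀ i, ∑ j, c i j + cB i = 0)
    (hlow : ∀ i,
      m i • (uL i - u i) +
        τ • ((∑ j, (contr (f (u j)) (c i j) - dvL i j • (u j - u i))) +
          contr (f (uB i)) (cB i) - dBL i • (uB i - u i)) = 0)
    (hhigh : ∀ i,
      (∑ j, mM i j • (uH j - u j)) +
        τ • ((∑ j, (contr (f (u j)) (c i j) - dvH i j • (u j - u i))) +
          contr (f (uB i)) (cB i) - dBH i • (uB i - u i)) = 0)
    (FL : ι → ι → (Fin M → ℝ))
    (hFL : ∀ i j, FL i j =
      τ • contr (f (u j) + f (u i)) (c i j) - (τ * dvL i j) • (u j - u i))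
    (FH : ι → ι → (Fin M → ℝ))
    (hFH : ∀ i j, FH i j =
      τ • contr (f (u j) + f (u i)) (c i j) - (τ * dvH i j) • (u j - u i) +
        (mM i j - (if i = j then m i else 0)) • ((uH j - u j) - (uH i - u i)))
    (FBL : ι → (Fin M → ℝ))
    (hFBL : ∀ i, FBL i =
      τ • contr (f (uB i) + f (u i)) (cB i) - (τ * dBL i) • (uB i - u i))
    (FBH : ι → (Fin M → ℝ))
    (hFBH : ∀ i, FBH i =
      τ • contr (f (uB i) + f (u i)) (cB i) - (τ * dBH i) • (uB i - u i))
    (A : ι → ι → (Fin M → ℝ)) (hA : ∀ i j, A i j = FL i j - FH i j)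
    (AB : ι → (Fin M → ℝ)) (hAB : ∀ i, AB i = FBL i - FBH i) :
    ∀ i, m i • uH i = m i • uL i + ∑ j, A i j + AB i := by
  intro i
  simp only [hA, hAB, hFL, hFH, hFBL, hFBH]
  exact high_low_order_identity_general m mM hrow τ (fun i j => contr (f (u j)) (c i j))
    (fun i j => contr (f (u j) + f (u i)) (c i j)) (fun i => contr (f (uB i)) (cB i))
    (fun i => contr (f (uB i) + f (u i)) (cB i)) dvL dvH dBL dBH u uB uL uH hlow hhigh i
end

section
/- Let B ⊆ S be a convex set and suppose the blended update u'' : ι → S satisfies, at a node i ∈ ι, m i • (u'' i) = m i • (uL i) + Σ_{j ∈ ι} (ℓ i j) • (A i j) + (ℓ∂ i) • (A∂ i) with m i > 0. Set κ := 1/(Fintype.card ι + 1), P i j := (1/(κ * m i)) • (A i j), and P∂ i := (1/(κ * m i)) • (A∂ i). If uL i + (ℓ i j) • (P i j) ∈ B for every j ∈ ι and uL i + (ℓ∂ i) • (P∂ i) ∈ B, then u'' i ∈ B. -/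
open Finset

/-!
Dividing the balance at a node by its mass and splitting `uL` according to weights of sum `1`, one
flux at a time, turns the limited update into a convex combination of the limited unidirectional
updates; the boundary flux is one more term of that combination.
-/

theorem add_sum_smul_mem_of_convex {𝕜 E ι : Type*} [Field 𝕜] [LinearOrder 𝕜]
    [IsStrictOrderedRing 𝕜] [AddCommGroup E] [Module 𝕜 E] {B : Set E} (hB : Convex 𝕜 B)
    {s : Finset ι} {w : ι → 𝕜} (hw : ∀ j ∈ s, 0 ≤ w j) (hw_sum : ∑ j ∈ s, w j = 1)
    {x : E} {v : ι → E} (hmem : ∀ j ∈ s, x + v j ∈ B) :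
    x + ∑ j ∈ s, w j • v j ∈ B := by
  have hcomb : ∑ j ∈ s, w j • (x + v j) = x + ∑ j ∈ s, w j • v j := by
    simp only [smul_add, sum_add_distrib, ← sum_smul, hw_sum, one_smul]
  exact hcomb ▸ hB.sum_mem hw hw_sum hmem

theorem smul_smul_one_div_mul_smul {𝕜 E : Type*} [Field 𝕜] [AddCommMonoid E] [Module 𝕜 E]
    {w : 𝕜} (hw : w ≠ 0) (m c : 𝕜) (a : E) :
    w • c • (1 / (w * m)) • a = m⁻¹ • c • a := by
  simp only [smul_smul]
  congr 1
  field_simp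

theorem limited_update_mem_convex_set_general {𝕜 E ι : Type*} [Field 𝕜] [LinearOrder 𝕜]
    [IsStrictOrderedRing 𝕜] [AddCommGroup E] [Module 𝕜 E] [Fintype ι]
    {B : Set E} (hB : Convex 𝕜 B) {m : 𝕜} (hm : m ≠ 0)
    {uL u : E} {A : ι → E} {AB : E} {l : ι → 𝕜} {lB : 𝕜}
    (hlim : m • u = m • uL + ∑ j, l j • A j + lB • AB)
    {w : ι → 𝕜} {wB : 𝕜} (hw : ∀ j, 0 < w j) (hwB : 0 < wB) (hw_sum : ∑ j, w j + wB = 1)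
    {P : ι → E} (hP : ∀ j, P j = (1 / (w j * m)) • A j)
    {PB : E} (hPB : PB = (1 / (wB * m)) • AB)
    (hmem : ∀ j, uL + l j • P j ∈ B) (hmemB : uL + lB • PB ∈ B) :
    u ∈ B := by
  have hflux (j : ι) : w j • l j • P j = m⁻¹ • l j • A j := by
    rw [hP, smul_smul_one_div_mul_smul (hw j).ne']
  have hfluxB : wB • lB • PB = m⁻¹ • lB • AB := by
    rw [hPB, smul_smul_one_div_mul_smul hwB.ne']
  let weight : Option ι → 𝕜 := fun o => o.elim wB w
  let increment : Option ι → E := fun o => o.elim (lB • PB) fun j => l j • P j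
  have hu : u = uL + ∑ o, weight o • increment o := calc
    u = m⁻¹ • (m • uL + ∑ j, l j • A j + lB • AB) := by rw [← hlim, inv_smul_smul₀ hm]
    _ = uL + (wB • lB • PB + ∑ j, w j • l j • P j) := by
      simp only [smul_add, inv_smul_smul₀ hm, smul_sum, hflux, hfluxB]
      abel
    _ = uL + ∑ o, weight o • increment o := by
      simp only [Fintype.sum_option, weight, increment, Option.elim]
  rw [hu]
  refine add_sum_smul_mem_of_convex hB ?_ ?_ ?_
  · rintro (_ | j) -
    exacts [hwB.le, (hw j).le]
  · simpa only [Fintype.sum_option, weight, Option.elim, add_comm] using hw_sum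
  · rintro (_ | j) -
    exacts [hmemB, hmem j]

theorem sum_const_one_div_card_add_one (𝕜 ι : Type*) [Field 𝕜] [CharZero 𝕜] [Fintype ι] :
    ∑ _j : ι, (1 / (Fintype.card ι + 1) : 𝕜) + 1 / (Fintype.card ι + 1) = 1 := by
  have hcard : (Fintype.card ι + 1 : 𝕜) ≠ 0 := Nat.cast_add_one_ne_zero _
  rw [sum_const, card_univ, nsmul_eq_mul]
  field_simp

/-- The limited update stays in a convex set containing the limited
unidirectional updates: `AB`, `lB`, `PB` play the roles of the boundary
quantities `A∂`, `ℓ∂`, `P∂`, and `u''` is the blended (limited) update. -/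
theorem limited_update_mem_convex_set
    {M : ℕ} (hM : 1 ≤ M)
    {ι : Type*} [Fintype ι] (hι : 1 ≤ Fintype.card ι)
    (B : Set (Fin M → ℝ)) (hB : Convex ℝ B)
    (m : ι → ℝ)
    (uL : ι → (Fin M → ℝ)) (u'' : ι → (Fin M → ℝ))
    (A : ι → ι → (Fin M → ℝ)) (AB : ι → (Fin M → ℝ))
    (l : ι → ι → ℝ) (lB : ι → ℝ)
    (i : ι) (hmi : 0 < m i)
    (hlim : m i • u'' i =
      m i • uL i + ∑ j, (l i j) • A i j + (lB i) • AB i)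
    (κ : ℝ) (hκ : κ = 1 / (Fintype.card ι + 1))
    (P : ι → ι → (Fin M → ℝ))
    (hP : ∀ i j, P i j = (1 / (κ * m i)) • A i j)
    (PB : ι → (Fin M → ℝ))
    (hPB : ∀ i, PB i = (1 / (κ * m i)) • AB i)
    (hmem : ∀ j, uL i + (l i j) • P i j ∈ B)
    (hmemB : uL i + (lB i) • PB i ∈ B) :
    u'' i ∈ B := by
  have hκ_pos : 0 < κ := hκ ▸ Nat.one_div_pos_of_nat
  exact limited_update_mem_convex_set_general hB hmi.ne' hlim (fun _ => hκ_pos) hκ_pos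
    (hκ ▸ sum_const_one_div_card_add_one ℝ ι) (hP i) (hPB i) hmem hmemB
end

section
/- The admissible set of the compressible Euler equations, 𝒜 := { (ρ, mv, E) ∈ ℝ × (EuclideanSpace ℝ (Fin d)) × ℝ : 0 < ρ and 0 < E − ‖mv‖²/(2ρ) }, is a convex subset of ℝ × (EuclideanSpace ℝ (Fin d)) × ℝ. -/
/-!
The kinetic energy `‖m‖² / (2ρ)` is, up to the factor `1 / 2`, the perspective `ρ ‖ρ⁻¹ m‖²` of the
convex function `‖·‖²`, hence jointly convex in `(ρ, m)` on `ρ > 0`. The admissible set is its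
strict epigraph.
-/

open Set

section Perspective

variable {𝕜 E β : Type*} [Field 𝕜] [AddCommMonoid E] [Module 𝕜 E] [AddCommMonoid β] [Module 𝕜 β]

lemma inv_smul_add_smul_eq {r t : 𝕜} (hr : r ≠ 0) (ht : t ≠ 0) (a b : 𝕜) (x y : E) :
    (a * r + b * t)⁻¹ • (a • x + b • y) =
      (a * r / (a * r + b * t)) • r⁻¹ • x + (b * t / (a * r + b * t)) • t⁻¹ • y := by
  simp only [smul_add, smul_smul]
  congr 2 <;> field_simp

variable (𝕜) in
/-- The perspective of `f`: its extension from height `1` in `𝕜 × E` to a positively homogeneous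
function on the half-space `0 < t`. At `t = 0` it has the junk value `0`. -/
def perspective (f : E → β) (p : 𝕜 × E) : β :=
  p.1 • f (p.1⁻¹ • p.2)

variable [LinearOrder 𝕜]

variable (𝕜) in
/-- The cone, without its apex, over the copy of `s` at height `1` in `𝕜 × E`. It is the natural
domain of the perspective of a function on `s`. -/
def coneOver (s : Set E) : Set (𝕜 × E) :=
  {p | 0 < p.1 ∧ p.1⁻¹ • p.2 ∈ s}

variable [IsStrictOrderedRing 𝕜]

lemma convex_coneOver {s : Set E} (hs : Convex 𝕜 s) : Convex 𝕜 (coneOver 𝕜 s) := by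
  rintro ⟨r, x⟩ ⟨hr, hx⟩ ⟨t, y⟩ ⟨ht, hy⟩ a b ha hb hab
  have hpos : 0 < a * r + b * t := convex_Ioi (0 : 𝕜) hr ht ha hb hab
  refine ⟨hpos, ?_⟩
  simp only [Prod.smul_mk, Prod.mk_add_mk, smul_eq_mul]
  rw [inv_smul_add_smul_eq hr.ne' ht.ne']
  have hsum : a * r / (a * r + b * t) + b * t / (a * r + b * t) = 1 := by
    rw [← add_div, div_self hpos.ne']
  exact hs hx hy (div_nonneg (mul_nonneg ha hr.le) hpos.le)
    (div_nonneg (mul_nonneg hb ht.le) hpos.le) hsum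

theorem convexOn_perspective [PartialOrder β] [PosSMulMono 𝕜 β] {s : Set E} {f : E → β}
    (hf : ConvexOn 𝕜 s f) : ConvexOn 𝕜 (coneOver 𝕜 s) (perspective 𝕜 f) := by
  refine ⟨convex_coneOver hf.1, ?_⟩
  rintro ⟨r, x⟩ ⟨hr, hx⟩ ⟨t, y⟩ ⟨ht, hy⟩ a b ha hb hab
  have hpos : 0 < a * r + b * t := convex_Ioi (0 : 𝕜) hr ht ha hb hab
  calc
    (a * r + b * t) • f ((a * r + b * t)⁻¹ • (a • x + b • y))
      ≤ (a * r + b * t) • ((a * r / (a * r + b * t)) • f (r⁻¹ • x) +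
          (b * t / (a * r + b * t)) • f (t⁻¹ • y)) := by
        rw [inv_smul_add_smul_eq hr.ne' ht.ne']
        exact smul_le_smul_of_nonneg_left ((convexOn_iff_div.1 hf).2 hx hy
          (mul_nonneg ha hr.le) (mul_nonneg hb ht.le) hpos) hpos.le
    _ = a • r • f (r⁻¹ • x) + b • t • f (t⁻¹ • y) := by
        simp only [smul_add, smul_smul, mul_div_cancel₀ _ hpos.ne']

end Perspective

section KineticEnergy

variable {V : Type*} [SeminormedAddCommGroup V] [NormedSpace ℝ V]

lemma convexOn_norm_sq_div_two_mul :
    ConvexOn ℝ {p : ℝ × V | 0 < p.1} fun p ↦ ‖p.2‖ ^ 2 / (2 * p.1) := by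
  have hsq : ConvexOn ℝ univ fun x : V ↦ (1 / 2 : ℝ) * ‖x‖ ^ 2 :=
    ((convexOn_univ_norm (E := V)).pow (fun _ _ ↦ norm_nonneg _) 2).smul (by norm_num)
  have hdom : coneOver ℝ (univ : Set V) = {p | 0 < p.1} := by simp [coneOver]
  rw [← hdom]
  refine (convexOn_perspective hsq).congr fun p ⟨hp, _⟩ ↦ ?_
  simp only [perspective, smul_eq_mul, norm_smul, norm_inv, Real.norm_of_nonneg hp.le]
  field_simp

theorem euler_admissible_set_convex_general :
    Convex ℝ {p : ℝ × V × ℝ | 0 < p.1 ∧ 0 < p.2.2 - ‖p.2.1‖ ^ 2 / (2 * p.1)} := by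
  simp only [sub_pos]
  exact convexOn_norm_sq_div_two_mul.convex_strict_epigraph.linear_preimage
    (LinearEquiv.prodAssoc ℝ ℝ V ℝ).symm.toLinearMap

end KineticEnergy

/-- The admissible set of the compressible Euler equations (positive density
and positive internal energy) is convex. States are triples
`(ρ, mv, E) : ℝ × EuclideanSpace ℝ (Fin d) × ℝ`. -/
theorem euler_admissible_set_convex
    {d : ℕ} (hd : 1 ≤ d) :
    Convex ℝ {p : ℝ × EuclideanSpace ℝ (Fin d) × ℝ |
      0 < p.1 ∧ 0 < p.2.2 - ‖p.2.1‖ ^ 2 / (2 * p.1)} :=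
  euler_admissible_set_convex_general
end
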